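/- arXiv:1408.6552 — 2 statements merged into one kernel-verified Lean document; each statement's English description precedes it below -/
import Mathlib

section
/- A framework G(p) in ℝ² is infinitesimally bearing rigid if and only if it is infinitesimally distance rigid. -/
/-- `projL x` is the orthogonal projection matrix
`P_x = I - (x/‖x‖)(x/‖x‖)ᵀ`, i.e. `projL x y = y - ⟪x,y⟫/‖x‖² • x`. -/
noncomputable def projL {d : ℕ} (x : EuclideanSpace ℝ (Fin d)) :
    EuclideanSpace ℝ (Fin d) →ₗ[ℝ] EuclideanSpace ℝ (Fin d) :=
  LinearMap.id - (‖x‖ ^ 2)⁻¹ •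
    (LinearMap.toSpanSingleton ℝ (EuclideanSpace ℝ (Fin d)) x ∘ₗ (innerSL ℝ x).toLinearMap)

/-- The bearing rigidity matrix `R(p) = diag(P_{g_k}/‖e_k‖)(H ⊗ I_d)` of the framework
whose `k`-th oriented edge goes from vertex `(E k).1` to vertex `(E k).2`
(so `e_k = p_{(E k).2} - p_{(E k).1}` and `g_k = e_k/‖e_k‖`), viewed as a linear map
`ℝ^{dn} → ℝ^{dm}`. -/
noncomputable def bearingMap {d n : ℕ} {ι : Type*} (E : ι → Fin n × Fin n)
    (p : Fin n → EuclideanSpace ℝ (Fin d)) :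
    (Fin n → EuclideanSpace ℝ (Fin d)) →ₗ[ℝ] (ι → EuclideanSpace ℝ (Fin d)) :=
  LinearMap.pi fun k =>
    (‖p (E k).2 - p (E k).1‖⁻¹ • projL (p (E k).2 - p (E k).1)) ∘ₗ
      ((LinearMap.proj (R := ℝ) (φ := fun _ : Fin n => EuclideanSpace ℝ (Fin d)) (E k).2) -
       (LinearMap.proj (R := ℝ) (φ := fun _ : Fin n => EuclideanSpace ℝ (Fin d)) (E k).1))

/-- The distance rigidity matrix `R_D(p) = diag(e_kᵀ)(H ⊗ I_d)`: its `k`-th row sends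
`δ` to `⟪e_k, δ_{(E k).2} - δ_{(E k).1}⟫`. -/
noncomputable def distanceMap {d n : ℕ} {ι : Type*} (E : ι → Fin n × Fin n)
    (p : Fin n → EuclideanSpace ℝ (Fin d)) :
    (Fin n → EuclideanSpace ℝ (Fin d)) →ₗ[ℝ] (ι → ℝ) :=
  LinearMap.pi fun k =>
    (innerSL ℝ (p (E k).2 - p (E k).1)).toLinearMap ∘ₗ
      ((LinearMap.proj (R := ℝ) (φ := fun _ : Fin n => EuclideanSpace ℝ (Fin d)) (E k).2) -
       (LinearMap.proj (R := ℝ) (φ := fun _ : Fin n => EuclideanSpace ℝ (Fin d)) (E k).1))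

/-- Rotation by a quarter turn in the plane. -/
noncomputable def rotJ : EuclideanSpace ℝ (Fin 2) ≃ₗ[ℝ] EuclideanSpace ℝ (Fin 2) where
  toFun y := !₂[-y 1, y 0]
  invFun y := !₂[y 1, -y 0]
  map_add' x y := by
    ext i; fin_cases i <;> simp [add_comm]
  map_smul' c x := by
    ext i; fin_cases i <;> simp
  left_inv x := by
    ext i; fin_cases i <;> simp
  right_inv x := by
    ext i; fin_cases i <;> simp

lemma projL_eq_zero_iff (x y : EuclideanSpace ℝ (Fin 2)) (hx : x ≠ 0) :
    projL x y = 0 ↔ inner ℝ x (rotJ y) = 0 := by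
  have hpos : 0 < ‖x‖ ^ 2 := by positivity
  have hN : ‖x‖ ^ 2 = x 0 ^ 2 + x 1 ^ 2 := by
    simp [EuclideanSpace.norm_sq_eq, Fin.sum_univ_two]
  rw [hN] at hpos
  have h1 : inner ℝ x (rotJ y) = x 1 * y 0 - x 0 * y 1 := by
    simp [rotJ, PiLp.inner_apply, Fin.sum_univ_two]; ring
  have hi : inner ℝ x y = x 0 * y 0 + x 1 * y 1 := by
    simp [PiLp.inner_apply, Fin.sum_univ_two]; ring
  have h2 : ∀ i, projL x y i = y i - (x 0 ^ 2 + x 1 ^ 2)⁻¹ * ((x 0 * y 0 + x 1 * y 1) * x i) := by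
    intro i
    simp [projL, hN, hi]
  have e0 : projL x y 0 = (x 0 ^ 2 + x 1 ^ 2)⁻¹ * (x 1 * (x 1 * y 0 - x 0 * y 1)) := by
    rw [h2]; field_simp; ring
  have e1 : projL x y 1 = (x 0 ^ 2 + x 1 ^ 2)⁻¹ * (-x 0 * (x 1 * y 0 - x 0 * y 1)) := by
    rw [h2]; field_simp; ring
  rw [h1]
  constructor
  · intro h
    rw [h] at e0 e1
    have n0 := inv_ne_zero hpos.ne'
    have f0 : x 1 * (x 1 * y 0 - x 0 * y 1) = 0 :=
      (mul_eq_zero.mp e0.symm).resolve_left n0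
    have f1 : -x 0 * (x 1 * y 0 - x 0 * y 1) = 0 :=
      (mul_eq_zero.mp e1.symm).resolve_left n0
    have : (x 0 ^ 2 + x 1 ^ 2) * (x 1 * y 0 - x 0 * y 1) = 0 := by
      linear_combination x 1 * f0 - x 0 * f1
    exact (mul_eq_zero.mp this).resolve_left hpos.ne'
  · intro h
    ext i
    fin_cases i
    · simpa [h] using e0
    · simpa [h] using e1

/-- A framework in ℝ² is infinitesimally bearing rigid
(`rank R(p) = 2n - 3`) iff it is infinitesimally distance rigid (`rank R_D(p) = 2n - 3`). -/
theorem inf_bearing_rigid_iff_inf_distance_rigid {n m : ℕ} (hn : 2 ≤ n)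
    (E : Fin m → Fin n × Fin n) (p : Fin n → EuclideanSpace ℝ (Fin 2))
    (hp : ∀ k, p (E k).1 ≠ p (E k).2) :
    Module.finrank ℝ (LinearMap.range (bearingMap E p)) = 2 * n - 3 ↔
      Module.finrank ℝ (LinearMap.range (distanceMap E p)) = 2 * n - 3 := by
  set Ψ : (Fin n → EuclideanSpace ℝ (Fin 2)) ≃ₗ[ℝ] (Fin n → EuclideanSpace ℝ (Fin 2)) :=
    LinearEquiv.piCongrRight (fun _ => rotJ) with hΨ
  have hker : LinearMap.ker (bearingMap E p) =
      LinearMap.ker (distanceMap E p ∘ₗ Ψ.toLinearMap) := by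
    ext δ
    simp only [LinearMap.mem_ker, funext_iff]
    refine forall_congr' fun k => ?_
    have hx : p (E k).2 - p (E k).1 ≠ 0 := sub_ne_zero.mpr (hp k).symm
    have := projL_eq_zero_iff _ (δ (E k).2 - δ (E k).1) hx
    have hl : bearingMap E p δ k = ‖p (E k).2 - p (E k).1‖⁻¹ •
        projL (p (E k).2 - p (E k).1) (δ (E k).2 - δ (E k).1) := rfl
    have hr : (distanceMap E p ∘ₗ Ψ.toLinearMap) δ k =
        inner ℝ (p (E k).2 - p (E k).1) (rotJ (δ (E k).2 - δ (E k).1)) := by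
      rw [map_sub]; rfl
    rw [hl, hr, Pi.zero_apply, Pi.zero_apply, ← this, smul_eq_zero]
    simp only [inv_eq_zero, norm_eq_zero, hx, false_or]
  have hrange : LinearMap.range (distanceMap E p ∘ₗ Ψ.toLinearMap) =
      LinearMap.range (distanceMap E p) :=
    LinearMap.range_comp_of_range_eq_top _ Ψ.range
  have h1 := LinearMap.finrank_range_add_finrank_ker (bearingMap E p)
  have h2 := LinearMap.finrank_range_add_finrank_ker (distanceMap E p ∘ₗ Ψ.toLinearMap)
  rw [hker] at h1
  rw [← hrange]
  omega
end

section
/- Let G(p*) be an infinitesimally bearing rigid framework in ℝ^d with bearings g_k* and centroid p̄*. Suppose a configuration p ∈ ℝ^{dn} with p_i ≠ p_j for every edge satisfies: (i) (H ⊗ I_d)^T diag(P_{g_1}, …, P_{g_m}) g* = 0, where g_k are the bearings of p; (ii) p̄ = p̄* (equal centroids); and (iii) ‖p − 1_n ⊗ p̄‖ = ‖p* − 1_n ⊗ p̄*‖ (equal scale). Then either p = p* (and then g_k = g_k* for all k), or p = −p* + 2(1_n ⊗ p̄*) (and then g_k = −g_k* for all k). In other words, the δ-dynamics has exactly the two equilibria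 δ = 0 and δ = −2(p* − 1_n ⊗ p̄*) where δ := p − p*. -/
/-- The linear map `w ↦ 1_n ⊗ w` stacking `n` copies of `w ∈ ℝ^d`; its range is
`span{1_n ⊗ I_d}`, the space of translational motions. -/
noncomputable def constLM (d n : ℕ) :
    EuclideanSpace ℝ (Fin d) →ₗ[ℝ] (Fin n → EuclideanSpace ℝ (Fin d)) :=
  LinearMap.pi fun _ => LinearMap.id

/-- The bearing-only control field `(H ⊗ I_d)ᵀ diag(P_{g_1}, …, P_{g_m}) g*` evaluated at a
configuration `q`: its `i`-th component is `∑_k [H]_{ki} P_{g_k} g*_k`, where `[H]_{ki} = 1`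
if `i` is the head `(E k).2` of edge `k`, `-1` if `i` is its tail `(E k).1`, and `0`
otherwise. -/
noncomputable def bearingCtrl {d n m : ℕ} (E : Fin m → Fin n × Fin n)
    (gs : Fin m → EuclideanSpace ℝ (Fin d)) (q : Fin n → EuclideanSpace ℝ (Fin d)) :
    Fin n → EuclideanSpace ℝ (Fin d) :=
  fun i => ∑ k, ((if (E k).2 = i then (1 : ℝ) else 0) - if (E k).1 = i then (1 : ℝ) else 0) •
    projL (q (E k).2 - q (E k).1) (gs k)

lemma projL_apply' {d : ℕ} (x y : EuclideanSpace ℝ (Fin d)) :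
    projL x y = y - ((‖x‖ ^ 2)⁻¹ * inner ℝ x y) • x := by
  simp [projL, mul_smul]

lemma projL_self {d : ℕ} (x : EuclideanSpace ℝ (Fin d)) (a : ℝ) :
    projL x (a • x) = 0 := by
  rcases eq_or_ne x 0 with rfl | hx
  · simp [projL_apply']
  have h : ‖x‖ ^ 2 ≠ 0 := by positivity
  rw [projL_apply', inner_smul_right, real_inner_self_eq_norm_sq,
    mul_comm a, inv_mul_cancel_left₀ h, sub_self]

lemma inner_projL {d : ℕ} (x y : EuclideanSpace ℝ (Fin d)) :
    inner ℝ y (projL x y) = ‖projL x y‖ ^ 2 := by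
  rcases eq_or_ne x 0 with rfl | hx
  · simp [projL_apply']
  have h : ‖x‖ ≠ 0 := by positivity
  rw [← real_inner_self_eq_norm_sq, projL_apply']
  simp only [inner_sub_left, inner_sub_right, inner_smul_left, inner_smul_right,
    real_inner_self_eq_norm_sq, real_inner_comm x y, conj_trivial]
  field_simp
  ring

lemma sum_ctrl {d n m : ℕ} (E : Fin m → Fin n × Fin n)
    (gs : Fin m → EuclideanSpace ℝ (Fin d)) (q r : Fin n → EuclideanSpace ℝ (Fin d)) :
    ∑ i, inner ℝ (r i) (bearingCtrl E gs q i) =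
      ∑ k, inner ℝ (r (E k).2 - r (E k).1) (projL (q (E k).2 - q (E k).1) (gs k)) := by
  simp only [bearingCtrl, inner_sum, inner_smul_right]
  rw [Finset.sum_comm]
  refine Finset.sum_congr rfl fun k _ => ?_
  simp [sub_mul, Finset.sum_sub_distrib, inner_sub_left]

/-- Let `G(p*)` be infinitesimally bearing rigid with bearings `g*`. If a
configuration `p` (with `p_i ≠ p_j` on edges) satisfies
(i) `(H ⊗ I_d)ᵀ diag(P_{g_k}) g* = 0`, (ii) equal centroid, and (iii) equal scale, then
either `p = p*` (and all bearings equal `g*_k`) or `p = -p* + 2(1_n ⊗ p̄*)` (and all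
bearings equal `-g*_k`). -/
theorem two_equilibria {d n m : ℕ} (hd : 2 ≤ d) (hn : 2 ≤ n)
    (E : Fin m → Fin n × Fin n)
    (pstar p : Fin n → EuclideanSpace ℝ (Fin d))
    (hpstar : ∀ k, pstar (E k).1 ≠ pstar (E k).2)
    (hp : ∀ k, p (E k).1 ≠ p (E k).2)
    (hibr : LinearMap.ker (bearingMap E pstar) =
      LinearMap.range (constLM d n) ⊔ Submodule.span ℝ {pstar})
    (gstar : Fin m → EuclideanSpace ℝ (Fin d))
    (hgstar : ∀ k, gstar k =
      ‖pstar (E k).2 - pstar (E k).1‖⁻¹ • (pstar (E k).2 - pstar (E k).1))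
    (heq : bearingCtrl E gstar p = 0)
    (hcent : (n : ℝ)⁻¹ • ∑ i, p i = (n : ℝ)⁻¹ • ∑ i, pstar i)
    (hscale : Real.sqrt (∑ i, ‖p i - (n : ℝ)⁻¹ • ∑ l, p l‖ ^ 2) =
      Real.sqrt (∑ i, ‖pstar i - (n : ℝ)⁻¹ • ∑ l, pstar l‖ ^ 2)) :
    (p = pstar ∧ ∀ k,
        ‖p (E k).2 - p (E k).1‖⁻¹ • (p (E k).2 - p (E k).1) = gstar k) ∨
    (p = (fun i => -pstar i + (2 : ℝ) • ((n : ℝ)⁻¹ • ∑ l, pstar l)) ∧ ∀ k,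
        ‖p (E k).2 - p (E k).1‖⁻¹ • (p (E k).2 - p (E k).1) = -gstar k) := by
  have hes : ∀ k, pstar (E k).2 - pstar (E k).1 =
      ‖pstar (E k).2 - pstar (E k).1‖ • gstar k := by
    intro k
    have h : ‖pstar (E k).2 - pstar (E k).1‖ ≠ 0 :=
      norm_ne_zero_iff.2 (sub_ne_zero.2 (hpstar k).symm)
    rw [hgstar, smul_inv_smul₀ h]
  have hsum := sum_ctrl E gstar p pstar
  rw [heq] at hsum
  have hP : ∀ k, projL (p (E k).2 - p (E k).1) (gstar k) = 0 := by
    have hterm : ∀ k, inner ℝ (pstar (E k).2 - pstar (E k).1)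
        (projL (p (E k).2 - p (E k).1) (gstar k)) =
        ‖pstar (E k).2 - pstar (E k).1‖ * ‖projL (p (E k).2 - p (E k).1) (gstar k)‖ ^ 2 := by
      intro k
      conv_lhs => rw [hes k]
      rw [inner_smul_left, inner_projL]
      rfl
    simp only [hterm, Pi.zero_apply, inner_zero_right, Finset.sum_const_zero] at hsum
    have h0 := (Finset.sum_eq_zero_iff_of_nonneg (fun k _ => by positivity)).1 hsum.symm
    intro k
    have h : ‖pstar (E k).2 - pstar (E k).1‖ ≠ 0 :=
      norm_ne_zero_iff.2 (sub_ne_zero.2 (hpstar k).symm)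
    simpa [sub_ne_zero.2 (hpstar k).symm] using h0 k (Finset.mem_univ k)
  have hker : p ∈ LinearMap.ker (bearingMap E pstar) := by
    rw [LinearMap.mem_ker]
    funext k
    have h : ‖pstar (E k).2 - pstar (E k).1‖ ≠ 0 :=
      norm_ne_zero_iff.2 (sub_ne_zero.2 (hpstar k).symm)
    have hk := hP k
    rw [projL_apply', sub_eq_zero] at hk
    have hek := hes k
    rw [hk, smul_smul] at hek
    generalize ‖pstar (E k).2 - pstar (E k).1‖ * _ = a at hek
    have ha : a ≠ 0 := by
      rintro rfl
      rw [zero_smul] at hek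
      exact h (by rw [hek, norm_zero])
    have hx : p (E k).2 - p (E k).1 = a⁻¹ • (pstar (E k).2 - pstar (E k).1) := by
      rw [hek, inv_smul_smul₀ ha]
    have := projL_self (pstar (E k).2 - pstar (E k).1) a⁻¹
    rw [← hx] at this
    simp only [bearingMap, LinearMap.pi_apply, LinearMap.comp_apply, LinearMap.sub_apply,
      LinearMap.proj_apply, LinearMap.smul_apply, this, smul_zero, Pi.zero_apply]
  rw [hibr, Submodule.mem_sup] at hker
  obtain ⟨_, ⟨w, rfl⟩, y, hy, hpy⟩ := hker
  obtain ⟨c, rfl⟩ := Submodule.mem_span_singleton.1 hy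
  have hpi : ∀ i, p i = w + c • pstar i := fun i => by
    rw [← hpy]; simp [constLM]
  have hn0 : (n : ℝ) ≠ 0 := by
    have : n ≠ 0 := by omega
    exact_mod_cast this
  set b := (n : ℝ)⁻¹ • ∑ l, pstar l with hb
  have hw : w = b - c • b := by
    have h1 : (n : ℝ)⁻¹ • ∑ i, p i = w + c • b := by
      simp only [hpi, Finset.sum_add_distrib, ← Finset.smul_sum, smul_add, hb]
      rw [smul_comm c]
      simp [← Nat.cast_smul_eq_nsmul ℝ, smul_smul, hn0]
    rw [hcent] at h1
    exact eq_sub_of_add_eq h1.symm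
  have hd' : ∀ i, p i - b = c • (pstar i - b) := fun i => by
    rw [hpi, hw, smul_sub]; abel
  rw [hcent] at hscale
  rw [Real.sqrt_inj (by positivity) (by positivity)] at hscale
  simp only [hd', norm_smul, mul_pow, ← Finset.mul_sum] at hscale
  have hfin1 : p = pstar → ∀ k,
      ‖p (E k).2 - p (E k).1‖⁻¹ • (p (E k).2 - p (E k).1) = gstar k := by
    rintro rfl k
    exact (hgstar k).symm
  by_cases hS : ∑ i, ‖pstar i - b‖ ^ 2 = 0
  · left
    have h0 := (Finset.sum_eq_zero_iff_of_nonneg (fun k _ => by positivity)).1 hS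
    have hpp : p = pstar := by
      funext i
      have h1 : pstar i - b = 0 := by simpa using h0 i (Finset.mem_univ i)
      have h2 := hd' i
      rw [h1, smul_zero] at h2
      rw [sub_eq_zero.1 h1, sub_eq_zero.1 h2]
    exact ⟨hpp, hfin1 hpp⟩
  · have hc : ‖c‖ ^ 2 = 1 := by
      apply mul_right_cancel₀ hS
      rw [hscale, one_mul]
    rw [Real.norm_eq_abs, sq_abs] at hc
    rcases (by simpa using hc : c = 1 ∨ c = -1) with rfl | rfl
    · left
      have hpp : p = pstar := by
        funext i
        simpa using hd' i
      exact ⟨hpp, hfin1 hpp⟩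
    · right
      refine ⟨?_, fun k => ?_⟩
      · funext i
        rw [hpi, hw, two_smul, neg_one_smul, neg_one_smul]; abel
      · have : p (E k).2 - p (E k).1 = -(pstar (E k).2 - pstar (E k).1) := by
          rw [hpi, hpi, neg_one_smul, neg_one_smul]; abel
        rw [this, norm_neg, smul_neg, hgstar]
end
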